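/- arXiv:1810.03869 — 2 statements merged into one kernel-verified Lean document; each statement's English description precedes it below -/
import Mathlib

section
/- Let h : [0,T] → ℝ⁵ be Lipschitz and u = (u1,u2) measurable with max(|u1|,|u2|) ≤ 1 a.e., satisfying the vertical subsystem and the maximality condition u1·h1 + u2·h2 = |h1| + |h2| a.e., and suppose |h1(t)| + |h2(t)| > 0 for all t (normal case). If h2(t) = 0 for all t in an open interval I ⊆ [0,T] (h2-singular arc), then on I: h3 ≡ 0; h1 is a nonzero constant; u1(t) = s1 := sgn(h1) for a.e. t ∈ I; and exactly one of the following holds: (a) h4 = h5 = 0 on I (and u2 is only restricted by |u2| ≤ 1), or (b) h5 ≠ 0 on I, |h4/h5| ≤ 1, and u2(t) = −s1·h4/h5 for a.e. t ∈ I. -/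
open MeasureTheory Set

/-- The vertical subsystem of the Pontryagin maximum principle for the Cartan
control system. -/
def VertOde (h1 h2 h3 h4 h5 u1 u2 : ℝ → ℝ) (t : ℝ) : Prop :=
  HasDerivAt h1 (-(u2 t) * h3 t) t ∧ HasDerivAt h2 (u1 t * h3 t) t ∧
  HasDerivAt h3 (u1 t * h4 t + u2 t * h5 t) t ∧
  HasDerivAt h4 0 t ∧ HasDerivAt h5 0 t

/-- A Lipschitz solution of the vertical subsystem on `[0,T]` with measurable control. -/
def IsVertSol (T : ℝ) (h1 h2 h3 h4 h5 u1 u2 : ℝ → ℝ) : Prop :=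
  (∃ K, LipschitzOnWith K (fun t => (h1 t, h2 t, h3 t, h4 t, h5 t)) (Icc 0 T)) ∧
  Measurable u1 ∧ Measurable u2 ∧
  (∀ᵐ t ∂(volume.restrict (Icc 0 T)), VertOde h1 h2 h3 h4 h5 u1 u2 t)

/-!
On the arc, `h2 = 0` turns the maximality condition into `u1 * h1 = |h1|` with `h1 ≠ 0`, so
`u1 = sgn h1`. Differentiating the identity `h2 = 0` gives `u1 * h3 = 0`, hence `h3 = 0` almost
everywhere and, by continuity, everywhere; then `h1` is constant. Differentiating `h3 = 0` gives
the linear relation `u1 * h4 + u2 * h5 = 0` with `h4` and `h5` constant: either `h5 = 0`, which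
forces `h4 = 0`, or the relation can be solved for `u2`, and `|u2| ≤ 1` bounds `|h4 / h5|`.
-/

/-- Local absolute continuity on a set `s` of reals: `f` is absolutely continuous on every compact
interval contained in `s`. Intervals are unordered, following `AbsolutelyContinuousOnInterval`. -/
def LocallyAbsolutelyContinuousOn {X : Type*} [PseudoMetricSpace X] (f : ℝ → X) (s : Set ℝ) :
    Prop :=
  ∀ ⦃a b : ℝ⦄, uIcc a b ⊆ s → AbsolutelyContinuousOnInterval f a b

namespace LocallyAbsolutelyContinuousOn

variable {X E F : Type*} [PseudoMetricSpace X] [SeminormedAddCommGroup E]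
  [NormedAddCommGroup F] [NormedSpace ℝ F] {s : Set ℝ}

theorem of_lipschitzOnWith {f : ℝ → X} {K : NNReal} (hf : LipschitzOnWith K f s) :
    LocallyAbsolutelyContinuousOn f s :=
  fun _ _ hab => (hf.mono hab).absolutelyContinuousOnInterval

theorem continuousOn {f : ℝ → E} (hf : LocallyAbsolutelyContinuousOn f s) (hs : IsOpen s) :
    ContinuousOn f s := by
  intro t ht
  obtain ⟨ε, hε, hsub⟩ := Metric.nhds_basis_closedBall.mem_iff.1 (hs.mem_nhds ht)
  have hball : Metric.closedBall t ε = uIcc (t - ε) (t + ε) := by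
    rw [Real.closedBall_eq_Icc, uIcc_of_le (by linarith)]
  rw [hball] at hsub
  have hnhds : uIcc (t - ε) (t + ε) ∈ nhds t := hball ▸ Metric.closedBall_mem_nhds t hε
  exact ((hf hsub).continuousOn.continuousAt hnhds).continuousWithinAt

theorem eq_of_ae_hasDerivAt_zero {f : ℝ → F} (hf : LocallyAbsolutelyContinuousOn f s)
    (hs : s.OrdConnected) (hderiv : ∀ᵐ t ∂(volume.restrict s), HasDerivAt f 0 t) {x y : ℝ}
    (hx : x ∈ s) (hy : y ∈ s) : f x = f y := by
  have hsub : uIcc x y ⊆ s := hs.uIcc_subset hx hy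
  obtain ⟨C, hC⟩ := (hf hsub).const_of_ae_hasDerivAt_zero <|
    (ae_imp_of_ae_restrict hderiv).mono fun t ht hmem => ht (hsub hmem)
  rw [hC x left_mem_uIcc, hC y right_mem_uIcc]

end LocallyAbsolutelyContinuousOn

theorem lipschitzOnWith_prodMk_iff {α β γ : Type*} [PseudoEMetricSpace α]
    [PseudoEMetricSpace β] [PseudoEMetricSpace γ] {f : α → β} {g : α → γ} {K : NNReal} {s : Set α} :
    LipschitzOnWith K (fun x => (f x, g x)) s ↔ LipschitzOnWith K f s ∧ LipschitzOnWith K g s :=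
  ⟨fun h => ⟨by simpa [Function.comp_def] using LipschitzWith.prod_fst.comp_lipschitzOnWith h,
      by simpa [Function.comp_def] using LipschitzWith.prod_snd.comp_lipschitzOnWith h⟩,
    fun ⟨hf, hg⟩ => by simpa using hf.prodMk hg⟩

theorem ae_eq_zero_of_ae_hasDerivAt_of_eq_const {F : Type*} [NormedAddCommGroup F]
    [NormedSpace ℝ F] {μ : Measure ℝ} {s : Set ℝ} {f f' : ℝ → F} {c : F} (hs : IsOpen s)
    (hf : ∀ t ∈ s, f t = c) (hderiv : ∀ᵐ t ∂(μ.restrict s), HasDerivAt f (f' t) t) :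
    ∀ᵐ t ∂(μ.restrict s), f' t = 0 := by
  filter_upwards [hderiv, ae_restrict_mem hs.measurableSet] with t hft ht
  have hconst : f =ᶠ[nhds t] fun _ => c := Filter.eventuallyEq_of_mem (hs.mem_nhds ht) hf
  exact hft.unique ((hasDerivAt_const t c).congr_of_eventuallyEq hconst)

theorem eq_sign_of_mul_eq_abs {u x : ℝ} (hx : x ≠ 0) (h : u * x = |x|) : u = Real.sign x := by
  rcases hx.lt_or_gt with hneg | hpos
  · rw [abs_of_neg hneg, neg_eq_neg_one_mul] at h
    rw [Real.sign_of_neg hneg, mul_right_cancel₀ hx h]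
  · rw [abs_of_pos hpos] at h
    rw [Real.sign_of_pos hpos, (mul_eq_right₀ hx).1 h]

theorem abs_sign_of_ne_zero {x : ℝ} (hx : x ≠ 0) : |Real.sign x| = 1 := by
  rcases Real.sign_apply_eq_of_ne_zero x hx with h | h <;> simp [h]

theorem eq_neg_mul_div_of_mul_add_mul_eq_zero {k : Type*} [Field k] {s p v q : k} (hq : q ≠ 0)
    (h : s * p + v * q = 0) : v = -s * (p / q) := by
  field_simp
  linear_combination h

/-- A Carathéodory solution of the vertical subsystem on `I`: each component is locally absolutely
continuous and the equations hold almost everywhere. -/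
structure IsVertSolOn (I : Set ℝ) (h1 h2 h3 h4 h5 u1 u2 : ℝ → ℝ) : Prop where
  ac_h1 : LocallyAbsolutelyContinuousOn h1 I
  ac_h2 : LocallyAbsolutelyContinuousOn h2 I
  ac_h3 : LocallyAbsolutelyContinuousOn h3 I
  ac_h4 : LocallyAbsolutelyContinuousOn h4 I
  ac_h5 : LocallyAbsolutelyContinuousOn h5 I
  ae_vertOde : ∀ᵐ t ∂(volume.restrict I), VertOde h1 h2 h3 h4 h5 u1 u2 t

section VerticalSubsystem

variable {I : Set ℝ} {h1 h2 h3 h4 h5 u1 u2 : ℝ → ℝ}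

theorem IsVertSol.isVertSolOn {T : ℝ} (hsol : IsVertSol T h1 h2 h3 h4 h5 u1 u2)
    (hI : I ⊆ Icc 0 T) : IsVertSolOn I h1 h2 h3 h4 h5 u1 u2 := by
  obtain ⟨⟨K, hK⟩, -, -, hode⟩ := hsol
  obtain ⟨hh1, hK⟩ := lipschitzOnWith_prodMk_iff.1 (hK.mono hI)
  obtain ⟨hh2, hK⟩ := lipschitzOnWith_prodMk_iff.1 hK
  obtain ⟨hh3, hK⟩ := lipschitzOnWith_prodMk_iff.1 hK
  obtain ⟨hh4, hh5⟩ := lipschitzOnWith_prodMk_iff.1 hK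
  exact ⟨.of_lipschitzOnWith hh1, .of_lipschitzOnWith hh2, .of_lipschitzOnWith hh3,
    .of_lipschitzOnWith hh4, .of_lipschitzOnWith hh5, ae_restrict_of_ae_restrict_of_subset hI hode⟩

namespace IsVertSolOn

theorem h3_eq_zero (hsol : IsVertSolOn I h1 h2 h3 h4 h5 u1 u2) (hI : IsOpen I)
    (hu1 : ∀ᵐ t ∂(volume.restrict I), u1 t ≠ 0) (hsing : ∀ t ∈ I, h2 t = 0) :
    ∀ t ∈ I, h3 t = 0 := by
  have hmul : ∀ᵐ t ∂(volume.restrict I), u1 t * h3 t = 0 :=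
    ae_eq_zero_of_ae_hasDerivAt_of_eq_const hI hsing (hsol.ae_vertOde.mono fun _ ht => ht.2.1)
  have hae : ∀ᵐ t ∂(volume.restrict I), h3 t = 0 := by
    filter_upwards [hmul, hu1] with t ht hne using (mul_eq_zero.1 ht).resolve_left hne
  exact Measure.eqOn_open_of_ae_eq hae hI (hsol.ac_h3.continuousOn hI) continuousOn_const

theorem h1_eq_of_mem (hsol : IsVertSolOn I h1 h2 h3 h4 h5 u1 u2) (hI : I.OrdConnected)
    (h3_zero : ∀ t ∈ I, h3 t = 0) {x y : ℝ} (hx : x ∈ I) (hy : y ∈ I) : h1 x = h1 y := by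
  refine hsol.ac_h1.eq_of_ae_hasDerivAt_zero hI ?_ hx hy
  filter_upwards [hsol.ae_vertOde, ae_restrict_mem hI.measurableSet] with t hode ht
  simpa [h3_zero t ht] using hode.1

theorem h4_eq_of_mem (hsol : IsVertSolOn I h1 h2 h3 h4 h5 u1 u2) (hI : I.OrdConnected) {x y : ℝ}
    (hx : x ∈ I) (hy : y ∈ I) : h4 x = h4 y :=
  hsol.ac_h4.eq_of_ae_hasDerivAt_zero hI (hsol.ae_vertOde.mono fun _ ht => ht.2.2.2.1) hx hy

theorem h5_eq_of_mem (hsol : IsVertSolOn I h1 h2 h3 h4 h5 u1 u2) (hI : I.OrdConnected) {x y : ℝ}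
    (hx : x ∈ I) (hy : y ∈ I) : h5 x = h5 y :=
  hsol.ac_h5.eq_of_ae_hasDerivAt_zero hI (hsol.ae_vertOde.mono fun _ ht => ht.2.2.2.2) hx hy

theorem ae_u1_mul_h4_add_u2_mul_h5_eq_zero (hsol : IsVertSolOn I h1 h2 h3 h4 h5 u1 u2)
    (hI : IsOpen I) (h3_zero : ∀ t ∈ I, h3 t = 0) :
    ∀ᵐ t ∂(volume.restrict I), u1 t * h4 t + u2 t * h5 t = 0 :=
  ae_eq_zero_of_ae_hasDerivAt_of_eq_const hI h3_zero (hsol.ae_vertOde.mono fun _ ht => ht.2.2.1)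

end IsVertSolOn

theorem ae_u1_eq_sign_of_maximality (hI : MeasurableSet I) (h1_ne : ∀ t ∈ I, h1 t ≠ 0)
    (hsing : ∀ t ∈ I, h2 t = 0)
    (hmax : ∀ᵐ t ∂(volume.restrict I), u1 t * h1 t + u2 t * h2 t = |h1 t| + |h2 t|) :
    ∀ᵐ t ∂(volume.restrict I), u1 t = Real.sign (h1 t) := by
  filter_upwards [hmax, ae_restrict_mem hI] with t hmax_t ht
  exact eq_sign_of_mul_eq_abs (h1_ne t ht) (by simpa [hsing t ht] using hmax_t)

theorem IsVertSolOn.h4_h5_dichotomy (hsol : IsVertSolOn I h1 h2 h3 h4 h5 u1 u2) (hIo : IsOpen I)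
    (hIc : I.OrdConnected) (hIn : I.Nonempty)
    (hu1 : ∀ᵐ t ∂(volume.restrict I), u1 t = Real.sign (h1 t))
    (hu2 : ∀ᵐ t ∂(volume.restrict I), |u2 t| ≤ 1)
    (h1_ne : ∀ t ∈ I, h1 t ≠ 0) (h3_zero : ∀ t ∈ I, h3 t = 0) :
    (∀ t ∈ I, h4 t = 0 ∧ h5 t = 0) ∨
      ((∀ t ∈ I, h5 t ≠ 0 ∧ |h4 t / h5 t| ≤ 1) ∧
        (∀ᵐ t ∂(volume.restrict I), u2 t = -(Real.sign (h1 t)) * (h4 t / h5 t))) := by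
  have hmem : ∀ᵐ t ∂(volume.restrict I), t ∈ I := ae_restrict_mem hIo.measurableSet
  have hrel : ∀ᵐ t ∂(volume.restrict I), Real.sign (h1 t) * h4 t + u2 t * h5 t = 0 := by
    filter_upwards [hsol.ae_u1_mul_h4_add_u2_mul_h5_eq_zero hIo h3_zero, hu1] with t ht hu1_t
    rwa [← hu1_t]
  have : (ae (volume.restrict I)).NeBot := ae_restrict_neBot.2 (hIo.measure_pos volume hIn).ne'
  obtain ⟨t₀, hrel₀, ht₀, hu2₀⟩ := (hrel.and (hmem.and hu2)).exists
  by_cases h5_zero : h5 t₀ = 0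
  · left
    have hsign : Real.sign (h1 t₀) ≠ 0 := Real.sign_eq_zero_iff.not.2 (h1_ne t₀ ht₀)
    have h4_zero : h4 t₀ = 0 := by simpa [h5_zero, hsign] using hrel₀
    exact fun t ht => ⟨(hsol.h4_eq_of_mem hIc ht ht₀).trans h4_zero,
      (hsol.h5_eq_of_mem hIc ht ht₀).trans h5_zero⟩
  · right
    have hbound : |h4 t₀ / h5 t₀| ≤ 1 := by
      rwa [eq_neg_mul_div_of_mul_add_mul_eq_zero h5_zero hrel₀, abs_mul, abs_neg,
        abs_sign_of_ne_zero (h1_ne t₀ ht₀), one_mul] at hu2₀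
    refine ⟨fun t ht => ?_, ?_⟩
    · rw [hsol.h4_eq_of_mem hIc ht ht₀, hsol.h5_eq_of_mem hIc ht ht₀]
      exact ⟨h5_zero, hbound⟩
    · filter_upwards [hrel, hmem] with t hrel_t ht
      have h5_ne : h5 t ≠ 0 := by rwa [hsol.h5_eq_of_mem hIc ht ht₀]
      exact eq_neg_mul_div_of_mul_add_mul_eq_zero h5_ne hrel_t

theorem h2_singular_arc_structure_general (hIo : IsOpen I) (hIc : I.OrdConnected)
    (hIn : I.Nonempty) (hsol : IsVertSolOn I h1 h2 h3 h4 h5 u1 u2)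
    (hu2 : ∀ᵐ t ∂(volume.restrict I), |u2 t| ≤ 1)
    (hmax : ∀ᵐ t ∂(volume.restrict I), u1 t * h1 t + u2 t * h2 t = |h1 t| + |h2 t|)
    (hnormal : ∀ t ∈ I, 0 < |h1 t| + |h2 t|) (hsing : ∀ t ∈ I, h2 t = 0) :
    (∀ t ∈ I, h3 t = 0) ∧
    (∃ c : ℝ, c ≠ 0 ∧ ∀ t ∈ I, h1 t = c) ∧
    (∀ᵐ t ∂(volume.restrict I), u1 t = Real.sign (h1 t)) ∧
    ((∀ t ∈ I, h4 t = 0 ∧ h5 t = 0) ∨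
      ((∀ t ∈ I, h5 t ≠ 0 ∧ |h4 t / h5 t| ≤ 1) ∧
        (∀ᵐ t ∂(volume.restrict I), u2 t = -(Real.sign (h1 t)) * (h4 t / h5 t)))) := by
  have h1_ne : ∀ t ∈ I, h1 t ≠ 0 := fun t ht => by simpa [hsing t ht] using hnormal t ht
  have hu1 := ae_u1_eq_sign_of_maximality hIo.measurableSet h1_ne hsing hmax
  have hu1_ne : ∀ᵐ t ∂(volume.restrict I), u1 t ≠ 0 := by
    filter_upwards [hu1, ae_restrict_mem hIo.measurableSet] with t hu1_t ht
    rw [hu1_t, Ne, Real.sign_eq_zero_iff]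
    exact h1_ne t ht
  have h3_zero := hsol.h3_eq_zero hIo hu1_ne hsing
  obtain ⟨t₀, ht₀⟩ := hIn
  exact ⟨h3_zero, ⟨h1 t₀, h1_ne t₀ ht₀, fun _ ht => hsol.h1_eq_of_mem hIc h3_zero ht ht₀⟩, hu1,
    hsol.h4_h5_dichotomy hIo hIc ⟨t₀, ht₀⟩ hu1 hu2 h1_ne h3_zero⟩

end VerticalSubsystem

/-- Characterization of `h2`-singular normal arcs. -/
theorem h2_singular_arc_structure
    (T a b : ℝ) (h1 h2 h3 h4 h5 u1 u2 : ℝ → ℝ)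
    (hsol : IsVertSol T h1 h2 h3 h4 h5 u1 u2)
    (hbound : ∀ᵐ t ∂(volume.restrict (Icc 0 T)), max |u1 t| |u2 t| ≤ 1)
    (hmax : ∀ᵐ t ∂(volume.restrict (Icc 0 T)),
      u1 t * h1 t + u2 t * h2 t = |h1 t| + |h2 t|)
    (hnormal : ∀ t ∈ Icc (0:ℝ) T, 0 < |h1 t| + |h2 t|)
    (hab : a < b) (hI : Ioo a b ⊆ Icc (0:ℝ) T)
    (hsing : ∀ t ∈ Ioo a b, h2 t = 0) :
    (∀ t ∈ Ioo a b, h3 t = 0) ∧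
    (∃ c : ℝ, c ≠ 0 ∧ ∀ t ∈ Ioo a b, h1 t = c) ∧
    (∀ᵐ t ∂(volume.restrict (Ioo a b)), u1 t = Real.sign (h1 t)) ∧
    ((∀ t ∈ Ioo a b, h4 t = 0 ∧ h5 t = 0) ∨
      ((∀ t ∈ Ioo a b, h5 t ≠ 0 ∧ |h4 t / h5 t| ≤ 1) ∧
        (∀ᵐ t ∂(volume.restrict (Ioo a b)),
          u2 t = -(Real.sign (h1 t)) * (h4 t / h5 t)))) := by
  have hu2 : ∀ᵐ t ∂(volume.restrict (Ioo a b)), |u2 t| ≤ 1 := by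
    filter_upwards [ae_restrict_of_ae_restrict_of_subset hI hbound] with t ht
    exact (le_max_right _ _).trans ht
  exact h2_singular_arc_structure_general isOpen_Ioo ordConnected_Ioo (nonempty_Ioo.2 hab)
    (hsol.isVertSolOn hI) hu2 (ae_restrict_of_ae_restrict_of_subset hI hmax)
    (fun t ht => hnormal t (hI ht)) hsing
end

section
/- Let x : [0,1] → ℝ be a Lipschitz function with x(0) = 0 and |x'(t)| ≤ 1 for a.e. t, set x1 = x(1), z1 = ∫₀¹ x(t) dt − x1/2, and w1 = −∫₀¹ x'(t)·(x(t)² + t²)/2 dt, and assume −1 < x1 < 1. Then −w_max(−x1, −z1) ≤ w1 ≤ w_max(x1, z1), where w_max(a,b) = (3 − 15a − 3a² − 17a³)/96 + b/2 − b²/(2(1+a)). -/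
open MeasureTheory Set

/-- `x : [0,1] → ℝ` is Lipschitz with `x(0) = 0` and a.e. derivative `u` with `|u| ≤ 1`. -/
def AdmissibleX (x u : ℝ → ℝ) : Prop :=
  (∃ K, LipschitzOnWith K x (Icc (0:ℝ) 1)) ∧ Measurable u ∧
  (∀ᵐ t ∂(volume.restrict (Icc (0:ℝ) 1)), |u t| ≤ 1 ∧ HasDerivAt x (u t) t) ∧
  x 0 = 0

/-- The bounding function `w_max` for the `w`-coordinate of the attainable set. -/
noncomputable def wMax (a b : ℝ) : ℝ :=
  (3 - 15 * a - 3 * a ^ 2 - 17 * a ^ 3) / 96 + b / 2 - b ^ 2 / (2 * (1 + a))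

/-!
Integrating by parts, `w₁ = -x₁³ / 6 - ½ ∫ u t²`, while `∫ u = x₁` and `∫ u t = x₁ / 2 - z₁`. So
the upper bound says how small the second moment of the density `v = (1 + u) / 2`, with values in
`[0, 1]`, can be once its mass `m = (1 + x₁) / 2` and its first moment are prescribed. The second
moment about any point `c` is smallest when `v` is the indicator of the interval of length `m`
centred at `c`, where it is `m³ / 12`; taking for `c` the barycentre of `v` gives the bound. The
lower bound is the upper bound for `-x`.
-/

section Parabola

variable {r : ℝ}

theorem max_sq_sub_sq_zero_eq_indicator (hr : 0 ≤ r) :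
    (fun t : ℝ => max (r ^ 2 - t ^ 2) 0) = (Icc (-r) r).indicator fun t => r ^ 2 - t ^ 2 := by
  ext t
  by_cases ht : t ∈ Icc (-r) r
  · rw [indicator_of_mem ht, max_eq_left (sub_nonneg.2 (sq_le_sq' ht.1 ht.2))]
  · rw [indicator_of_notMem ht, max_eq_right]
    contrapose! ht
    exact abs_le_of_sq_le_sq' (sub_pos.1 ht).le hr

theorem integrable_max_sq_sub_sq_zero (hr : 0 ≤ r) :
    Integrable fun t : ℝ => max (r ^ 2 - t ^ 2) 0 := by
  rw [max_sq_sub_sq_zero_eq_indicator hr, integrable_indicator_iff measurableSet_Icc]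
  exact (by fun_prop : Continuous fun t : ℝ => r ^ 2 - t ^ 2).integrableOn_Icc

theorem integral_max_sq_sub_sq_zero (hr : 0 ≤ r) :
    ∫ t : ℝ, max (r ^ 2 - t ^ 2) 0 = 4 * r ^ 3 / 3 := by
  rw [max_sq_sub_sq_zero_eq_indicator hr, integral_indicator measurableSet_Icc,
    integral_Icc_eq_integral_Ioc, ← intervalIntegral.integral_of_le (neg_le_self hr),
    intervalIntegral.integral_sub (by simp) (by simp), intervalIntegral.integral_const,
    integral_pow]
  simp only [smul_eq_mul]
  ring

end Parabola

section Moments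

variable {v : ℝ → ℝ} {a b : ℝ}

theorem integral_mul_sq_sub_sq_le (hab : a ≤ b) (hv : IntervalIntegrable v volume a b)
    (hv01 : ∀ᵐ t ∂volume.restrict (Icc a b), v t ∈ Icc 0 1) {r : ℝ} (hr : 0 ≤ r) (c : ℝ) :
    ∫ t in a..b, v t * (r ^ 2 - (t - c) ^ 2) ≤ 4 * r ^ 3 / 3 := by
  have hint : Integrable fun t => max (r ^ 2 - (t - c) ^ 2) 0 :=
    (integrable_max_sq_sub_sq_zero hr).comp_sub_right c
  have hpointwise : (fun t => v t * (r ^ 2 - (t - c) ^ 2)) ≤ᵐ[volume.restrict (Icc a b)]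
      fun t => max (r ^ 2 - (t - c) ^ 2) 0 := by
    filter_upwards [hv01] with t ⟨hv0, hv1⟩
    calc v t * (r ^ 2 - (t - c) ^ 2) ≤ v t * max (r ^ 2 - (t - c) ^ 2) 0 :=
          mul_le_mul_of_nonneg_left (le_max_left _ _) hv0
      _ ≤ max (r ^ 2 - (t - c) ^ 2) 0 := mul_le_of_le_one_left (le_max_right _ _) hv1
  calc ∫ t in a..b, v t * (r ^ 2 - (t - c) ^ 2)
      ≤ ∫ t in a..b, max (r ^ 2 - (t - c) ^ 2) 0 :=
        intervalIntegral.integral_mono_ae_restrict hab (hv.mul_continuousOn (by fun_prop))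
          hint.intervalIntegrable hpointwise
    _ ≤ ∫ t, max (r ^ 2 - (t - c) ^ 2) 0 := by
        rw [intervalIntegral.integral_of_le hab]
        exact setIntegral_le_integral hint (.of_forall fun t => le_max_right _ _)
    _ = 4 * r ^ 3 / 3 := by
        rw [integral_sub_right_eq_self (fun t => max (r ^ 2 - t ^ 2) 0),
          integral_max_sq_sub_sq_zero hr]

theorem integral_pow_three_div_twelve_le (hab : a ≤ b) (hv : IntervalIntegrable v volume a b)
    (hv01 : ∀ᵐ t ∂volume.restrict (Icc a b), v t ∈ Icc 0 1) (c : ℝ) :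
    (∫ t in a..b, v t) ^ 3 / 12 ≤ ∫ t in a..b, v t * (t - c) ^ 2 := by
  set m := ∫ t in a..b, v t
  have hm0 : 0 ≤ m :=
    intervalIntegral.integral_nonneg_of_ae_restrict hab (hv01.mono fun _ ht => ht.1)
  -- The extremal density is the indicator of the interval of radius `m / 2` about `c`.
  have hle := integral_mul_sq_sub_sq_le hab hv hv01 (div_nonneg hm0 zero_le_two) c
  have hsplit : ∫ t in a..b, v t * ((m / 2) ^ 2 - (t - c) ^ 2)
      = m * (m / 2) ^ 2 - ∫ t in a..b, v t * (t - c) ^ 2 := by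
    simp only [mul_sub]
    rw [intervalIntegral.integral_sub (hv.mul_const _) (hv.mul_continuousOn (by fun_prop)),
      intervalIntegral.integral_mul_const]
  linarith

theorem sq_div_add_pow_three_div_twelve_le_integral_mul_sq (hab : a ≤ b)
    (hv : IntervalIntegrable v volume a b)
    (hv01 : ∀ᵐ t ∂volume.restrict (Icc a b), v t ∈ Icc 0 1) (hm : (∫ t in a..b, v t) ≠ 0) :
    (∫ t in a..b, v t * t) ^ 2 / (∫ t in a..b, v t) + (∫ t in a..b, v t) ^ 3 / 12
      ≤ ∫ t in a..b, v t * t ^ 2 := by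
  set m := ∫ t in a..b, v t
  set m₁ := ∫ t in a..b, v t * t
  have hexpand : ∫ t in a..b, v t * (t - m₁ / m) ^ 2
      = (∫ t in a..b, v t * t ^ 2) - m₁ ^ 2 / m := by
    have htwo : IntervalIntegrable (fun t => v t * t ^ 2) volume a b :=
      hv.mul_continuousOn (by fun_prop)
    have hone : IntervalIntegrable (fun t => 2 * (m₁ / m) * (v t * t)) volume a b :=
      (hv.mul_continuousOn (by fun_prop)).const_mul _
    have hzero : IntervalIntegrable (fun t => (m₁ / m) ^ 2 * v t) volume a b := hv.const_mul _
    calc ∫ t in a..b, v t * (t - m₁ / m) ^ 2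
        = ∫ t in a..b, (v t * t ^ 2 - 2 * (m₁ / m) * (v t * t) + (m₁ / m) ^ 2 * v t) := by
          congr 1 with t
          ring
      _ = (∫ t in a..b, v t * t ^ 2) - 2 * (m₁ / m) * m₁ + (m₁ / m) ^ 2 * m := by
          rw [intervalIntegral.integral_add (htwo.sub hone) hzero,
            intervalIntegral.integral_sub htwo hone, intervalIntegral.integral_const_mul,
            intervalIntegral.integral_const_mul]
      _ = (∫ t in a..b, v t * t ^ 2) - m₁ ^ 2 / m := by
          field_simp
          ring
  linarith [integral_pow_three_div_twelve_le hab hv hv01 (m₁ / m)]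

theorem integral_one_add_div_two_mul {u g : ℝ → ℝ} (hu : IntervalIntegrable u volume a b)
    (hg : ContinuousOn g (uIcc a b)) :
    ∫ t in a..b, (1 + u t) / 2 * g t
      = ((∫ t in a..b, g t) + ∫ t in a..b, u t * g t) / 2 := by
  rw [← intervalIntegral.integral_add hg.intervalIntegrable (hu.mul_continuousOn hg),
    ← intervalIntegral.integral_div]
  congr 1 with t
  ring

end Moments

section AbsolutelyContinuous

variable {f f' : ℝ → ℝ} {a b : ℝ}

theorem intervalIntegrable_of_ae_hasDerivAt (hf : AbsolutelyContinuousOnInterval f a b)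
    (hf' : ∀ᵐ t ∂volume.restrict (uIoc a b), HasDerivAt f (f' t) t) :
    IntervalIntegrable f' volume a b :=
  hf.intervalIntegrable_deriv.congr_ae (hf'.mono fun _ ht => ht.deriv)

theorem integral_eq_sub_of_ae_hasDerivAt (hf : AbsolutelyContinuousOnInterval f a b)
    (hf' : ∀ᵐ t ∂volume.restrict (uIoc a b), HasDerivAt f (f' t) t) :
    ∫ t in a..b, f' t = f b - f a := by
  rw [← hf.integral_deriv_eq_sub]
  exact intervalIntegral.integral_congr_ae_restrict (hf'.mono fun _ ht => ht.deriv.symm)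

theorem integral_mul_sq_of_ae_hasDerivAt (hf : AbsolutelyContinuousOnInterval f a b)
    (hf' : ∀ᵐ t ∂volume.restrict (uIoc a b), HasDerivAt f (f' t) t) :
    ∫ t in a..b, f' t * f t ^ 2 = (f b ^ 3 - f a ^ 3) / 3 := by
  have hcube : ∀ᵐ t ∂volume.restrict (uIoc a b),
      HasDerivAt (fun s => 1 / 3 * (f s * (f s * f s))) (f' t * f t ^ 2) t := by
    filter_upwards [hf'] with t ht
    convert! (ht.fun_mul (ht.fun_mul ht)).const_mul (1 / 3) using 1
    ring
  rw [integral_eq_sub_of_ae_hasDerivAt ((hf.fun_mul (hf.fun_mul hf)).const_mul (1 / 3)) hcube]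
  ring

theorem integral_mul_id_of_ae_hasDerivAt (hf : AbsolutelyContinuousOnInterval f a b)
    (hf' : ∀ᵐ t ∂volume.restrict (uIoc a b), HasDerivAt f (f' t) t) :
    ∫ t in a..b, f' t * t = f b * b - f a * a - ∫ t in a..b, f t := by
  have hid : AbsolutelyContinuousOnInterval (fun t : ℝ => t) a b :=
    LipschitzWith.id.lipschitzOnWith.absolutelyContinuousOnInterval
  have hprod : ∀ᵐ t ∂volume.restrict (uIoc a b),
      HasDerivAt (fun s => f s * s) (f' t * t + f t) t := by
    filter_upwards [hf'] with t ht
    simpa only [mul_one] using ht.fun_mul (hasDerivAt_id' t)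
  rw [← integral_eq_sub_of_ae_hasDerivAt (hf.fun_mul hid) hprod, intervalIntegral.integral_add
    ((intervalIntegrable_of_ae_hasDerivAt hf hf').mul_continuousOn (continuousOn_id' _))
    hf.continuousOn.intervalIntegrable, add_sub_cancel_right]

end AbsolutelyContinuous

theorem wMax_eq {a : ℝ} (ha : 1 + a ≠ 0) (b : ℝ) :
    wMax a b = (1 - a ^ 3) / 6
      - ((((1 + a) / 2 - b) / 2) ^ 2 / ((1 + a) / 2) + ((1 + a) / 2) ^ 3 / 12) := by
  unfold wMax
  field_simp
  ring

namespace AdmissibleX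

variable {x u : ℝ → ℝ}

theorem neg (hx : AdmissibleX x u) : AdmissibleX (fun t => -x t) (fun t => -u t) := by
  obtain ⟨⟨K, hK⟩, hu, hderiv, h0⟩ := hx
  refine ⟨⟨K, hK.neg⟩, hu.neg, ?_, neg_eq_zero.2 h0⟩
  filter_upwards [hderiv] with t ⟨hut, hxt⟩
  exact ⟨by rwa [abs_neg], hxt.neg⟩

theorem absolutelyContinuousOnInterval (hx : AdmissibleX x u) :
    AbsolutelyContinuousOnInterval x 0 1 := by
  obtain ⟨⟨K, hK⟩, -⟩ := hx
  rw [← uIcc_of_le zero_le_one] at hK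
  exact hK.absolutelyContinuousOnInterval

theorem ae_hasDerivAt (hx : AdmissibleX x u) :
    ∀ᵐ t ∂volume.restrict (uIoc 0 1), HasDerivAt x (u t) t := by
  rw [uIoc_of_le zero_le_one]
  exact ae_restrict_of_ae_restrict_of_subset Ioc_subset_Icc_self (hx.2.2.1.mono fun _ ht => ht.2)

theorem intervalIntegrable_deriv (hx : AdmissibleX x u) : IntervalIntegrable u volume 0 1 :=
  intervalIntegrable_of_ae_hasDerivAt hx.absolutelyContinuousOnInterval hx.ae_hasDerivAt

theorem integral_mul_sq_add_sq_div_two (hx : AdmissibleX x u) :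
    ∫ t in (0:ℝ)..1, u t * (x t ^ 2 + t ^ 2) / 2
      = x 1 ^ 3 / 6 + (∫ t in (0:ℝ)..1, u t * t ^ 2) / 2 := by
  have hac := hx.absolutelyContinuousOnInterval
  have hxc := hac.continuousOn
  have hx0 : x 0 = 0 := hx.2.2.2
  rw [intervalIntegral.integral_div]
  simp only [mul_add]
  rw [intervalIntegral.integral_add (hx.intervalIntegrable_deriv.mul_continuousOn (by fun_prop))
      (hx.intervalIntegrable_deriv.mul_continuousOn (by fun_prop)),
    integral_mul_sq_of_ae_hasDerivAt hac hx.ae_hasDerivAt, hx0]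
  ring

theorem integral_one_add_div_two (hx : AdmissibleX x u) :
    ∫ t in (0:ℝ)..1, (1 + u t) / 2 = (1 + x 1) / 2 := by
  have hx0 : x 0 = 0 := hx.2.2.2
  rw [intervalIntegral.integral_div,
    intervalIntegral.integral_add intervalIntegrable_const hx.intervalIntegrable_deriv,
    integral_eq_sub_of_ae_hasDerivAt hx.absolutelyContinuousOnInterval hx.ae_hasDerivAt,
    hx0, integral_one, sub_zero, sub_zero]

theorem integral_one_add_div_two_mul_id (hx : AdmissibleX x u) :
    ∫ t in (0:ℝ)..1, (1 + u t) / 2 * t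
      = ((1 + x 1) / 2 - ((∫ t in (0:ℝ)..1, x t) - x 1 / 2)) / 2 := by
  rw [integral_one_add_div_two_mul hx.intervalIntegrable_deriv (continuousOn_id' _),
    integral_mul_id_of_ae_hasDerivAt hx.absolutelyContinuousOnInterval hx.ae_hasDerivAt,
    integral_id]
  ring

theorem neg_integral_eq_sub_integral_one_add_div_two_mul_sq (hx : AdmissibleX x u) :
    -(∫ t in (0:ℝ)..1, u t * (x t ^ 2 + t ^ 2) / 2)
      = (1 - x 1 ^ 3) / 6 - ∫ t in (0:ℝ)..1, (1 + u t) / 2 * t ^ 2 := by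
  rw [hx.integral_mul_sq_add_sq_div_two,
    integral_one_add_div_two_mul hx.intervalIntegrable_deriv (by fun_prop), integral_pow]
  ring

theorem ae_one_add_div_two_mem_Icc (hx : AdmissibleX x u) :
    ∀ᵐ t ∂volume.restrict (Icc (0:ℝ) 1), (1 + u t) / 2 ∈ Icc 0 1 := by
  filter_upwards [hx.2.2.1] with t ⟨hut, _⟩
  obtain ⟨hl, hr⟩ := abs_le.1 hut
  constructor <;> linarith

theorem neg_integral_le_wMax (hx : AdmissibleX x u) (hx1 : -1 < x 1) :
    -(∫ t in (0:ℝ)..1, u t * (x t ^ 2 + t ^ 2) / 2)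
      ≤ wMax (x 1) ((∫ t in (0:ℝ)..1, x t) - x 1 / 2) := by
  have hmass : (∫ t in (0:ℝ)..1, (1 + u t) / 2) ≠ 0 := by
    rw [hx.integral_one_add_div_two]
    linarith
  have hmoment := sq_div_add_pow_three_div_twelve_le_integral_mul_sq zero_le_one
    ((intervalIntegrable_const.add hx.intervalIntegrable_deriv).div_const 2)
    hx.ae_one_add_div_two_mem_Icc hmass
  rw [hx.integral_one_add_div_two, hx.integral_one_add_div_two_mul_id] at hmoment
  rw [hx.neg_integral_eq_sub_integral_one_add_div_two_mul_sq, wMax_eq (by linarith)]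
  linarith

end AdmissibleX

/-- Bounds on the coordinate `w1 = −∫₀¹ x'·(x² + t²)/2 dt` over the time-1 attainable
set of the Cartan system with `u2 ≡ 1`, in terms of `x1 = x(1)` and
`z1 = ∫₀¹ x − x1/2`: one has `−w_max(−x1,−z1) ≤ w1 ≤ w_max(x1,z1)`. -/
theorem w_coordinate_bounds
    (x u : ℝ → ℝ) (hx : AdmissibleX x u)
    (hx1l : -1 < x 1) (hx1r : x 1 < 1) :
    -wMax (-(x 1)) (-((∫ t in (0:ℝ)..1, x t) - x 1 / 2))
        ≤ -(∫ t in (0:ℝ)..1, u t * ((x t) ^ 2 + t ^ 2) / 2) ∧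
    -(∫ t in (0:ℝ)..1, u t * ((x t) ^ 2 + t ^ 2) / 2)
        ≤ wMax (x 1) ((∫ t in (0:ℝ)..1, x t) - x 1 / 2) := by
  refine ⟨?_, hx.neg_integral_le_wMax hx1l⟩
  have hneg := hx.neg.neg_integral_le_wMax (neg_lt_neg hx1r)
  have hw : ∫ t in (0:ℝ)..1, -u t * ((-x t) ^ 2 + t ^ 2) / 2
      = -∫ t in (0:ℝ)..1, u t * (x t ^ 2 + t ^ 2) / 2 := by
    simp only [neg_sq, neg_mul, neg_div, intervalIntegral.integral_neg]
  have hz : (∫ t in (0:ℝ)..1, -x t) - -x 1 / 2 = -((∫ t in (0:ℝ)..1, x t) - x 1 / 2) := by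
    rw [intervalIntegral.integral_neg]
    ring
  rw [hw, hz] at hneg
  exact neg_le.1 hneg
end
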